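/- The K-subalgebra S^δ = ker δ_S equals the K-subalgebra of S generated by the set {u_{2i−1} : 1 ≤ i ≤ d} ∪ {v_{2i−1} : 1 ≤ i ≤ d} ∪ {α_{pq} : 1 ≤ p < q ≤ d} ∪ {β_{pq} : 1 ≤ p < q ≤ d} ∪ {γ_{pq} : 1 ≤ p, q ≤ d}. -/

import Mathlib

open MvPolynomial

namespace Stmt1

/-- The polynomial ring `S = K[u_1, …, u_{2d}, v_1, …, v_{2d}]`, where the variable
`X (Sum.inl (i, 0))` is `u_{2i-1}`, `X (Sum.inl (i, 1))` is `u_{2i}`,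
`X (Sum.inr (i, 0))` is `v_{2i-1}` and `X (Sum.inr (i, 1))` is `v_{2i}`. -/
abbrev S (K : Type*) [Field K] (d : ℕ) : Type _ :=
  MvPolynomial ((Fin d × Fin 2) ⊕ (Fin d × Fin 2)) K

variable (K : Type*) [Field K] (d : ℕ)

noncomputable def u (j : Fin d × Fin 2) : S K d := X (Sum.inl j)

noncomputable def v (j : Fin d × Fin 2) : S K d := X (Sum.inr j)

/-- `α_{pq} = u_{2p-1} u_{2q} - u_{2p} u_{2q-1}`. -/
noncomputable def α (p q : Fin d) : S K d :=
  u K d (p, 0) * u K d (q, 1) - u K d (p, 1) * u K d (q, 0)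

/-- `β_{pq} = v_{2p-1} v_{2q} - v_{2p} v_{2q-1}`. -/
noncomputable def β (p q : Fin d) : S K d :=
  v K d (p, 0) * v K d (q, 1) - v K d (p, 1) * v K d (q, 0)

/-- `γ_{pq} = u_{2p-1} v_{2q} - u_{2p} v_{2q-1}`. -/
noncomputable def γ (p q : Fin d) : S K d :=
  u K d (p, 0) * v K d (q, 1) - u K d (p, 1) * v K d (q, 0)

/-!
With the variables of `S` arranged in pairs, `δ_S` is the derivation `W = ∑ xᵢ ∂/∂yᵢ` of
`R[xᵢ, yᵢ]`, and the claim is that `ker W` is generated by the `xᵢ` and the minors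
`xᵢ yⱼ - yᵢ xⱼ`. The Cayley operators `Ωᵢⱼ = ∂²/∂xᵢ∂yⱼ - ∂²/∂xⱼ∂yᵢ` map `ker W` to itself and lower
the degree by two, and a Capelli-type identity gives
`∑ᵢⱼ (xᵢ yⱼ - yᵢ xⱼ) Ωᵢⱼ f = 2 (a + 1) b f` for `f ∈ ker W` of degree `a` in the `xᵢ` and `b` in the
`yᵢ`. For `b ≠ 0` one divides by `2 (a + 1) b` and concludes by induction on the degree; for `b = 0`
the polynomial `f` involves only the `xᵢ`.
-/

section Derivations

variable {R σ : Type*}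

theorem derivation_apply_algHom_apply [CommSemiring R] {A : Type*} [CommSemiring A] [Algebra R A]
    (φ : MvPolynomial σ R →ₐ[R] A) (D : Derivation R (MvPolynomial σ R) (MvPolynomial σ R))
    (D' : Derivation R A A) (h : ∀ i, D' (φ (X i)) = φ (D (X i))) (p : MvPolynomial σ R) :
    D' (φ p) = φ (D p) := by
  induction p using MvPolynomial.induction_on with
  | C r => rw [← algebraMap_eq, AlgHom.commutes, D.map_algebraMap, D'.map_algebraMap, map_zero]
  | add p q hp hq => simp only [map_add, hp, hq]
  | mul_X p i hp => simp only [map_mul, Derivation.leibniz, map_add, smul_eq_mul, hp, h]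

theorem derivation_apply_eq_sum_pderiv [CommSemiring R] [Fintype σ]
    (D : Derivation R (MvPolynomial σ R) (MvPolynomial σ R)) (f : MvPolynomial σ R) :
    D f = ∑ i, pderiv i f * D (X i) := by
  classical
  induction f using MvPolynomial.induction_on with
  | C r => simp
  | add p q hp hq => simp only [map_add, hp, hq, add_mul, Finset.sum_add_distrib]
  | mul_X p i hp =>
    simp [Derivation.leibniz, hp, pderiv_X, Pi.single_apply, add_mul, Finset.sum_add_distrib,
      Finset.mul_sum, mul_assoc]

theorem derivation_commutator_of_X [CommRing R]
    (D₁ D₂ D₃ : Derivation R (MvPolynomial σ R) (MvPolynomial σ R))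
    (h : ∀ i, D₁ (D₂ (X i)) = D₂ (D₁ (X i)) + D₃ (X i)) (f : MvPolynomial σ R) :
    D₁ (D₂ f) = D₂ (D₁ f) + D₃ f := by
  have commutator_eq : ⁅D₁, D₂⁆ = D₃ := derivation_ext fun i => by
    rw [Derivation.commutator_apply, h, add_sub_cancel_left]
  rw [← commutator_eq, Derivation.commutator_apply, add_sub_cancel]

theorem pderiv_pderiv_comm [CommRing R] (i j : σ) (f : MvPolynomial σ R) :
    pderiv i (pderiv j f) = pderiv j (pderiv i f) := by
  classical
  simpa using derivation_commutator_of_X (pderiv i) (pderiv j) 0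
    (fun k => by simp [pderiv_X, Pi.single_apply, apply_ite]) f

variable [CommSemiring R] {M : Type*} {w : σ → M} {k : M}
  {D : Derivation R (MvPolynomial σ R) (MvPolynomial σ R)}

theorem isHomogeneous_weightedHomogeneousComponent [AddCommMonoid M] (w : σ → M)
    {p : MvPolynomial σ R} {n : ℕ} (hp : p.IsHomogeneous n) (a : M) :
    (weightedHomogeneousComponent w a p).IsHomogeneous n := by
  classical
  intro s hs
  rw [coeff_weightedHomogeneousComponent] at hs
  exact hp (ite_ne_right_iff.mp hs).2

theorem isWeightedHomogeneous_derivation_monomial [AddCommMonoid M]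
    (hD : ∀ i, IsWeightedHomogeneous w (D (X i)) (w i + k)) (s : σ →₀ ℕ) (r : R) :
    IsWeightedHomogeneous w (D (monomial s r)) (Finsupp.weight w s + k) := by
  have D_eq : D = mkDerivation R fun i => D (X i) :=
    derivation_ext fun i => (mkDerivation_X R (fun i => D (X i)) i).symm
  rw [D_eq, mkDerivation_monomial, smul_eq_C_mul]
  refine (IsWeightedHomogeneous.sum _ _ _ fun i hi => ?_).C_mul r
  have weight_eq : Finsupp.weight w (s - Finsupp.single i 1) + (w i + k) =
      Finsupp.weight w s + k := by
    rw [← add_assoc, Finsupp.weight_sub_single_add (Finsupp.mem_support_iff.mp hi)]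
  exact weight_eq ▸ (isWeightedHomogeneous_monomial w _ _ rfl).mul (hD i)

theorem weightedHomogeneousComponent_derivation [AddCancelCommMonoid M]
    (hD : ∀ i, IsWeightedHomogeneous w (D (X i)) (w i + k)) (n : M) (f : MvPolynomial σ R) :
    weightedHomogeneousComponent w (n + k) (D f) = D (weightedHomogeneousComponent w n f) := by
  classical
  induction f using MvPolynomial.induction_on' with
  | monomial s r =>
    rw [weightedHomogeneousComponent_of_mem (isWeightedHomogeneous_monomial w s r rfl),
      weightedHomogeneousComponent_of_mem (isWeightedHomogeneous_derivation_monomial hD s r)]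
    simp only [add_left_inj, apply_ite D, map_zero]
  | add p q hp hq => simp only [map_add, hp, hq]

end Derivations

section Weitzenbock

variable (R : Type*) [CommRing R] {ι : Type*}

/-- The minor `xᵢ yⱼ - yᵢ xⱼ` of the generic `ι × 2` matrix whose columns are
`xᵢ = X (i, 0)` and `yᵢ = X (i, 1)`. -/
noncomputable def minor (i j : ι) : MvPolynomial (ι × Fin 2) R :=
  X (i, 0) * X (j, 1) - X (i, 1) * X (j, 0)

theorem minor_swap (i j : ι) : minor R j i = -minor R i j := by
  unfold minor
  ring

variable (ι) in
/-- The variables `xᵢ` and the minors `xᵢ yⱼ - yᵢ xⱼ`: the generators, conjectured by Nowicki, of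
the algebra of constants of `∑ xᵢ ∂/∂yᵢ`. -/
def nowickiGenerators : Set (MvPolynomial (ι × Fin 2) R) :=
  (Set.range fun i => X (i, 0)) ∪ Set.range fun p : ι × ι => minor R p.1 p.2

variable {R}

theorem supported_le_adjoin_nowickiGenerators :
    supported R {s : ι × Fin 2 | s.2 = 0} ≤ Algebra.adjoin R (nowickiGenerators R ι) := by
  refine Algebra.adjoin_mono ?_
  rintro _ ⟨⟨i, _⟩, rfl, rfl⟩
  exact Or.inl ⟨i, rfl⟩

/-- Cayley's operator `∂²/∂xᵢ∂yⱼ - ∂²/∂xⱼ∂yᵢ`, dual to the minor `xᵢ yⱼ - yᵢ xⱼ`. -/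
noncomputable def cayleyOmega (i j : ι) (f : MvPolynomial (ι × Fin 2) R) :
    MvPolynomial (ι × Fin 2) R :=
  pderiv (i, 0) (pderiv (j, 1) f) - pderiv (j, 0) (pderiv (i, 1) f)

theorem isHomogeneous_cayleyOmega {n : ℕ} {f : MvPolynomial (ι × Fin 2) R} (hf : f.IsHomogeneous n)
    (i j : ι) : (cayleyOmega i j f).IsHomogeneous (n - 1 - 1) :=
  hf.pderiv.pderiv.sub hf.pderiv.pderiv

/-- The weight whose associated degree is the degree in the variables `xᵢ = X (i, 0)`. -/
def xWeight (s : ι × Fin 2) : ℕ := if s.2 = 0 then 1 else 0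

variable (R ι) in
/-- The basic Weitzenböck derivation `∑ xᵢ ∂/∂yᵢ`, where `xᵢ = X (i, 0)` and `yᵢ = X (i, 1)`. -/
noncomputable def weitzenbock :
    Derivation R (MvPolynomial (ι × Fin 2) R) (MvPolynomial (ι × Fin 2) R) :=
  mkDerivation R fun s => if s.2 = 0 then 0 else X (s.1, 0)

@[simp]
theorem weitzenbock_X_zero (i : ι) : weitzenbock R ι (X (i, 0)) = 0 := by
  simp [weitzenbock]

@[simp]
theorem weitzenbock_X_one (i : ι) : weitzenbock R ι (X (i, 1)) = X (i, 0) := by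
  simp [weitzenbock]

theorem weitzenbock_minor (i j : ι) : weitzenbock R ι (minor R i j) = 0 := by
  simp only [minor, map_sub, Derivation.leibniz, weitzenbock_X_zero, weitzenbock_X_one, smul_eq_mul]
  ring

theorem pderiv_one_weitzenbock (i : ι) (f : MvPolynomial (ι × Fin 2) R) :
    pderiv (i, 1) (weitzenbock R ι f) = weitzenbock R ι (pderiv (i, 1) f) := by
  classical
  simpa using derivation_commutator_of_X (pderiv (i, 1)) (weitzenbock R ι) 0
    (Prod.forall.mpr fun j => Fin.forall_fin_two.mpr
      ⟨by simp [pderiv_X], by simp [pderiv_X, Pi.single_apply, apply_ite]⟩) f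

theorem pderiv_zero_weitzenbock (i : ι) (f : MvPolynomial (ι × Fin 2) R) :
    pderiv (i, 0) (weitzenbock R ι f) =
      weitzenbock R ι (pderiv (i, 0) f) + pderiv (i, 1) f := by
  classical
  exact derivation_commutator_of_X (pderiv (i, 0)) (weitzenbock R ι) (pderiv (i, 1))
    (Prod.forall.mpr fun j => Fin.forall_fin_two.mpr
      ⟨by simp [pderiv_X, Pi.single_apply, apply_ite], by simp [pderiv_X, Pi.single_apply]⟩) f

variable {f : MvPolynomial (ι × Fin 2) R}

theorem weitzenbock_pderiv_one_eq_zero (hf : weitzenbock R ι f = 0) (i : ι) :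
    weitzenbock R ι (pderiv (i, 1) f) = 0 := by
  rw [← pderiv_one_weitzenbock, hf, map_zero]

theorem weitzenbock_pderiv_zero_eq_neg (hf : weitzenbock R ι f = 0) (i : ι) :
    weitzenbock R ι (pderiv (i, 0) f) = -pderiv (i, 1) f := by
  rw [eq_neg_iff_add_eq_zero, ← pderiv_zero_weitzenbock, hf, map_zero]

theorem weitzenbock_cayleyOmega_eq_zero (hf : weitzenbock R ι f = 0) (i j : ι) :
    weitzenbock R ι (cayleyOmega i j f) = 0 := by
  rw [cayleyOmega, map_sub,
    weitzenbock_pderiv_zero_eq_neg (weitzenbock_pderiv_one_eq_zero hf j),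
    weitzenbock_pderiv_zero_eq_neg (weitzenbock_pderiv_one_eq_zero hf i),
    pderiv_pderiv_comm, sub_self]

theorem weitzenbock_homogeneousComponent_eq_zero (hf : weitzenbock R ι f = 0) (n : ℕ) :
    weitzenbock R ι (homogeneousComponent n f) = 0 := by
  have weitzenbock_X_homogeneous : ∀ s : ι × Fin 2,
      IsWeightedHomogeneous (1 : ι × Fin 2 → ℕ) (weitzenbock R ι (X s)) (1 + 0)
    | (i, 0) => by simpa using isWeightedHomogeneous_zero R _ _
    | (i, 1) => by simpa [IsHomogeneous] using isHomogeneous_X R (i, (0 : Fin 2))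
  rw [homogeneousComponent, ← weightedHomogeneousComponent_derivation weitzenbock_X_homogeneous, hf,
    map_zero]

theorem weitzenbock_xWeight_component_eq_zero (hf : weitzenbock R ι f = 0) (a : ℕ) :
    weitzenbock R ι (weightedHomogeneousComponent xWeight a f) = 0 := by
  have weitzenbock_X_homogeneous : ∀ s : ι × Fin 2,
      IsWeightedHomogeneous xWeight (weitzenbock R ι (X s)) (xWeight s + 1)
    | (i, 0) => by simpa using isWeightedHomogeneous_zero R _ _
    | (i, 1) => by simpa [xWeight] using isWeightedHomogeneous_X R xWeight (i, (0 : Fin 2))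
  rw [← weightedHomogeneousComponent_derivation weitzenbock_X_homogeneous, hf, map_zero]

theorem mem_supported_of_xDegree_eq_degree {n : ℕ} (hn : f.IsHomogeneous n)
    (hx : IsWeightedHomogeneous xWeight f n) : f ∈ supported R {s : ι × Fin 2 | s.2 = 0} := by
  rw [mem_supported]
  rintro ⟨i, l⟩ hs
  obtain ⟨m, hm, hi⟩ := (mem_vars_iff_mem_support _).mp hs
  by_contra hl
  have weight_eq : Finsupp.weight xWeight m = Finsupp.weight 1 m :=
    (hx (mem_support_iff.mp hm)).trans (hn (mem_support_iff.mp hm)).symm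
  have weight_lt : Finsupp.weight xWeight m < Finsupp.weight 1 m := by
    simp only [Finsupp.weight_apply]
    refine Finset.sum_lt_sum (fun s _ => ?_) ⟨(i, l), hi, ?_⟩
    · simp only [xWeight, Pi.one_apply, smul_eq_mul]
      split_ifs <;> simp
    · simpa [xWeight, Nat.pos_iff_ne_zero, show l ≠ 0 from hl] using hi
  exact weight_lt.ne weight_eq

theorem isUnit_two_mul_add_one_mul_sub [Algebra ℚ R] {n a : ℕ} (h : n ≠ a) :
    IsUnit (2 * (((a : R) + 1) * ((n : R) - a))) := by
  have rat_ne_zero : (2 * (((a : ℚ) + 1) * ((n : ℚ) - a))) ≠ 0 :=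
    mul_ne_zero two_ne_zero
      (mul_ne_zero a.cast_add_one_ne_zero (sub_ne_zero.mpr (Nat.cast_injective.ne h)))
  simpa only [map_mul, map_add, map_sub, map_one, map_natCast, map_ofNat] using
    rat_ne_zero.isUnit.map (algebraMap ℚ R)

section Capelli

variable [Fintype ι]

theorem weitzenbock_apply (f : MvPolynomial (ι × Fin 2) R) :
    weitzenbock R ι f = ∑ j, X (j, 0) * pderiv (j, 1) f := by
  rw [derivation_apply_eq_sum_pderiv, Fintype.sum_prod_type]
  simp [mul_comm]

theorem sum_X_zero_mul_pderiv {a : ℕ} (hf : IsWeightedHomogeneous xWeight f a) :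
    ∑ i, X (i, 0) * pderiv (i, 0) f = (a : R) • f := by
  simpa [Fintype.sum_prod_type, xWeight, Nat.cast_smul_eq_nsmul] using hf.sum_weight_X_mul_pderiv

theorem sum_X_one_mul_pderiv {n a : ℕ} (hn : f.IsHomogeneous n)
    (ha : IsWeightedHomogeneous xWeight f a) :
    ∑ i, X (i, 1) * pderiv (i, 1) f = ((n : R) - a) • f := by
  have euler := hn.sum_X_mul_pderiv
  rw [Fintype.sum_prod_type] at euler
  simp only [Fin.sum_univ_two, Finset.sum_add_distrib, sum_X_zero_mul_pderiv ha] at euler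
  rw [sub_smul, eq_sub_iff_add_eq', euler, Nat.cast_smul_eq_nsmul]

variable {a b : R}

theorem sum_minor_mul_pderiv_pderiv (hf : weitzenbock R ι f = 0)
    (hy : ∑ i, X (i, 1) * pderiv (i, 1) f = b • f) (i : ι) :
    ∑ j, minor R i j * pderiv (i, 0) (pderiv (j, 1) f) =
      b • (X (i, 0) * pderiv (i, 0) f) + X (i, 1) * pderiv (i, 1) f := by
  have sum_y : ∑ j, X (j, 1) * pderiv (i, 0) (pderiv (j, 1) f) = b • pderiv (i, 0) f := by
    rw [← Derivation.map_smul, ← hy, map_sum]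
    refine Finset.sum_congr rfl fun j _ => ?_
    rw [pderiv_mul, pderiv_X_of_ne (by simp), zero_mul, zero_add]
  have sum_x : ∑ j, X (j, 0) * pderiv (i, 0) (pderiv (j, 1) f) = -pderiv (i, 1) f := by
    rw [← weitzenbock_pderiv_zero_eq_neg hf, weitzenbock_apply]
    exact Finset.sum_congr rfl fun j _ => by rw [pderiv_pderiv_comm]
  simp only [minor, sub_mul, mul_assoc, Finset.sum_sub_distrib, ← Finset.mul_sum, sum_y, sum_x,
    mul_smul_comm, mul_neg, sub_neg_eq_add]

theorem sum_minor_mul_cayleyOmega (hf : weitzenbock R ι f = 0)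
    (hx : ∑ i, X (i, 0) * pderiv (i, 0) f = a • f)
    (hy : ∑ i, X (i, 1) * pderiv (i, 1) f = b • f) :
    ∑ i, ∑ j, minor R i j * cayleyOmega i j f = (2 * ((a + 1) * b)) • f := by
  have half_sum :
      ∑ i, ∑ j, minor R i j * pderiv (i, 0) (pderiv (j, 1) f) = ((a + 1) * b) • f := by
    simp only [sum_minor_mul_pderiv_pderiv hf hy, Finset.sum_add_distrib, ← Finset.smul_sum, hx, hy]
    module
  have swapped_half_sum :
      ∑ i, ∑ j, minor R i j * pderiv (j, 0) (pderiv (i, 1) f) = -(((a + 1) * b) • f) := by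
    rw [Finset.sum_comm, ← half_sum, ← Finset.sum_neg_distrib]
    refine Finset.sum_congr rfl fun i _ => ?_
    rw [← Finset.sum_neg_distrib]
    exact Finset.sum_congr rfl fun j _ => by rw [minor_swap, neg_mul]
  simp only [cayleyOmega, mul_sub, Finset.sum_sub_distrib, half_sum, swapped_half_sum]
  module

end Capelli

variable [Finite ι] [Algebra ℚ R]

theorem mem_adjoin_of_isHomogeneous {n : ℕ} (hn : f.IsHomogeneous n)
    (hf : weitzenbock R ι f = 0) : f ∈ Algebra.adjoin R (nowickiGenerators R ι) := by
  have := Fintype.ofFinite ι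
  induction n using Nat.strong_induction_on generalizing f with
  | _ n ih =>
  rw [← finsum_weightedHomogeneousComponent xWeight f]
  refine finsum_induction (· ∈ Algebra.adjoin R (nowickiGenerators R ι)) (zero_mem _)
    (fun _ _ => add_mem) fun a => ?_
  have ha := weightedHomogeneousComponent_isWeightedHomogeneous (w := xWeight) a f
  have hg := weitzenbock_xWeight_component_eq_zero hf a
  have hgn := isHomogeneous_weightedHomogeneousComponent xWeight hn a
  generalize weightedHomogeneousComponent xWeight a f = g at ha hg hgn ⊢
  rcases eq_or_ne n a with rfl | hna
  · exact supported_le_adjoin_nowickiGenerators (mem_supported_of_xDegree_eq_degree hgn ha)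
  rcases n.eq_zero_or_pos with rfl | hpos
  · rw [totalDegree_eq_zero_iff_eq_C.mp ((totalDegree_zero_iff_isHomogeneous _).mpr hgn)]
    exact Subalgebra.algebraMap_mem _ _
  rw [← Subalgebra.mem_toSubmodule,
    ← Submodule.smul_mem_iff_of_isUnit _ (isUnit_two_mul_add_one_mul_sub hna),
    ← sum_minor_mul_cayleyOmega hg (sum_X_zero_mul_pderiv ha) (sum_X_one_mul_pderiv hgn ha)]
  exact sum_mem fun i _ => sum_mem fun j _ => Subalgebra.mul_mem _
    (Algebra.subset_adjoin (Or.inr ⟨(i, j), rfl⟩))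
    (ih (n - 1 - 1) (by lia) (isHomogeneous_cayleyOmega hgn i j)
      (weitzenbock_cayleyOmega_eq_zero hg i j))

theorem weitzenbock_eq_zero_iff_mem_adjoin :
    weitzenbock R ι f = 0 ↔ f ∈ Algebra.adjoin R (nowickiGenerators R ι) := by
  constructor
  · intro hf
    rw [← sum_homogeneousComponent f]
    exact sum_mem fun n _ => mem_adjoin_of_isHomogeneous
      (homogeneousComponent_isHomogeneous n f) (weitzenbock_homogeneousComponent_eq_zero hf n)
  · have generators_eq_zero : Set.EqOn (weitzenbock R ι) 0 (nowickiGenerators R ι) := by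
      rintro _ (⟨i, rfl⟩ | ⟨⟨i, j⟩, rfl⟩)
      · exact weitzenbock_X_zero i
      · exact weitzenbock_minor i j
    exact fun hf => Derivation.eqOn_adjoin (D2 := 0) generators_eq_zero hf

end Weitzenbock

section PairedVariables

theorem α_self (i : Fin d) : α K d i i = 0 := by
  unfold α
  ring

theorem α_swap (i j : Fin d) : α K d j i = -α K d i j := by
  unfold α
  ring

theorem β_self (i : Fin d) : β K d i i = 0 := by
  unfold β
  ring

theorem β_swap (i j : Fin d) : β K d j i = -β K d i j := by
  unfold β
  ring

theorem mem_of_alternating {ι A B : Type*} [LinearOrder ι] [AddGroup A] [SetLike B A]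
    [AddSubgroupClass B A] {b : B} {m : ι → ι → A} (m_self : ∀ i, m i i = 0)
    (m_swap : ∀ i j, m j i = -m i j) (m_mem : ∀ i j, i < j → m i j ∈ b) (i j : ι) :
    m i j ∈ b := by
  rcases lt_trichotomy i j with hij | rfl | hji
  · exact m_mem i j hij
  · exact (m_self i).symm ▸ zero_mem b
  · exact m_swap j i ▸ neg_mem (m_mem j i hji)

/-- Regards the `2d` pairs `(u_{2i-1}, u_{2i})`, `(v_{2i-1}, v_{2i})` of variables of `S` as one
family of pairs `(xᵢ, yᵢ)`. -/
noncomputable def pairedVariables : MvPolynomial ((Fin d ⊕ Fin d) × Fin 2) K ≃ₐ[K] S K d :=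
  renameEquiv K (Equiv.sumProdDistrib (Fin d) (Fin d) (Fin 2))

variable {K d}

@[simp]
theorem pairedVariables_X_inl (i : Fin d) (l : Fin 2) :
    pairedVariables K d (X (Sum.inl i, l)) = u K d (i, l) := by
  simp [pairedVariables, u]

@[simp]
theorem pairedVariables_X_inr (i : Fin d) (l : Fin 2) :
    pairedVariables K d (X (Sum.inr i, l)) = v K d (i, l) := by
  simp [pairedVariables, v]

theorem pairedVariables_minor_inl_inl (i j : Fin d) :
    pairedVariables K d (minor K (Sum.inl i) (Sum.inl j)) = α K d i j := by
  simp [minor, α]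

theorem pairedVariables_minor_inr_inr (i j : Fin d) :
    pairedVariables K d (minor K (Sum.inr i) (Sum.inr j)) = β K d i j := by
  simp [minor, β]

theorem pairedVariables_minor_inl_inr (i j : Fin d) :
    pairedVariables K d (minor K (Sum.inl i) (Sum.inr j)) = γ K d i j := by
  simp [minor, γ]

theorem pairedVariables_minor_inr_inl (i j : Fin d) :
    pairedVariables K d (minor K (Sum.inr i) (Sum.inl j)) = -γ K d j i := by
  rw [minor_swap, map_neg, pairedVariables_minor_inl_inr]

theorem pairedVariables_weitzenbock {δ : Derivation K (S K d) (S K d)}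
    (hu0 : ∀ i, δ (u K d (i, 0)) = 0) (hu1 : ∀ i, δ (u K d (i, 1)) = u K d (i, 0))
    (hv0 : ∀ i, δ (v K d (i, 0)) = 0) (hv1 : ∀ i, δ (v K d (i, 1)) = v K d (i, 0))
    (g : MvPolynomial ((Fin d ⊕ Fin d) × Fin 2) K) :
    δ (pairedVariables K d g) = pairedVariables K d (weitzenbock K (Fin d ⊕ Fin d) g) := by
  refine derivation_apply_algHom_apply (pairedVariables K d).toAlgHom _ δ ?_ g
  rintro ⟨i | i, l⟩ <;> fin_cases l <;> simp [hu0, hu1, hv0, hv1]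

theorem pairedVariables_image_nowickiGenerators_subset {A : Subalgebra K (S K d)}
    (hu : ∀ i, u K d (i, 0) ∈ A) (hv : ∀ i, v K d (i, 0) ∈ A)
    (hα : ∀ i j, i < j → α K d i j ∈ A) (hβ : ∀ i j, i < j → β K d i j ∈ A)
    (hγ : ∀ i j, γ K d i j ∈ A) :
    pairedVariables K d '' nowickiGenerators K (Fin d ⊕ Fin d) ⊆ A := by
  have α_mem (i j : Fin d) : α K d i j ∈ A := mem_of_alternating (α_self K d) (α_swap K d) hα i j
  have β_mem (i j : Fin d) : β K d i j ∈ A := mem_of_alternating (β_self K d) (β_swap K d) hβ i j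
  rintro _ ⟨_, ⟨i | i, rfl⟩ | ⟨⟨i | i, j | j⟩, rfl⟩, rfl⟩
  · simpa only [pairedVariables_X_inl, SetLike.mem_coe] using hu i
  · simpa only [pairedVariables_X_inr, SetLike.mem_coe] using hv i
  · simpa only [pairedVariables_minor_inl_inl, SetLike.mem_coe] using α_mem i j
  · simpa only [pairedVariables_minor_inl_inr, SetLike.mem_coe] using hγ i j
  · simpa only [pairedVariables_minor_inr_inl, SetLike.mem_coe] using neg_mem (hγ j i)
  · simpa only [pairedVariables_minor_inr_inr, SetLike.mem_coe] using β_mem i j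

theorem map_pairedVariables_adjoin_nowickiGenerators :
    (Algebra.adjoin K (nowickiGenerators K (Fin d ⊕ Fin d))).map (pairedVariables K d).toAlgHom =
      Algebra.adjoin K
        ((Set.range fun i : Fin d => u K d (i, 0)) ∪
          (Set.range fun i : Fin d => v K d (i, 0)) ∪
          {p : S K d | ∃ i j : Fin d, i < j ∧ p = α K d i j} ∪
          {p : S K d | ∃ i j : Fin d, i < j ∧ p = β K d i j} ∪
          {p : S K d | ∃ i j : Fin d, p = γ K d i j}) := by
  rw [AlgHom.map_adjoin]
  refine le_antisymm (Algebra.adjoin_le ?_) (Algebra.adjoin_mono ?_)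
  · exact pairedVariables_image_nowickiGenerators_subset
      (fun i => Algebra.subset_adjoin (.inl (.inl (.inl (.inl ⟨i, rfl⟩)))))
      (fun i => Algebra.subset_adjoin (.inl (.inl (.inl (.inr ⟨i, rfl⟩)))))
      (fun i j hij => Algebra.subset_adjoin (.inl (.inl (.inr ⟨i, j, hij, rfl⟩))))
      (fun i j hij => Algebra.subset_adjoin (.inl (.inr ⟨i, j, hij, rfl⟩)))
      (fun i j => Algebra.subset_adjoin (.inr ⟨i, j, rfl⟩))
  · rintro _ ((((⟨i, rfl⟩ | ⟨i, rfl⟩) | ⟨i, j, -, rfl⟩) | ⟨i, j, -, rfl⟩) | ⟨i, j, rfl⟩)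
    · exact ⟨_, .inl ⟨.inl i, rfl⟩, pairedVariables_X_inl i 0⟩
    · exact ⟨_, .inl ⟨.inr i, rfl⟩, pairedVariables_X_inr i 0⟩
    · exact ⟨_, .inr ⟨(.inl i, .inl j), rfl⟩, pairedVariables_minor_inl_inl i j⟩
    · exact ⟨_, .inr ⟨(.inr i, .inr j), rfl⟩, pairedVariables_minor_inr_inr i j⟩
    · exact ⟨_, .inr ⟨(.inl i, .inr j), rfl⟩, pairedVariables_minor_inl_inr i j⟩

end PairedVariables

/-- The algebra of constants `S^δ = ker δ_S` is generated, as a `K`-subalgebra of `S`, by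
`u_1, u_3, …, u_{2d-1}`, `v_1, v_3, …, v_{2d-1}`, the `α_{pq}` and `β_{pq}` for
`1 ≤ p < q ≤ d`, and the `γ_{pq}` for `1 ≤ p, q ≤ d`. -/
theorem stmt1 [CharZero K] (hd : 1 ≤ d)
    (δS : Derivation K (S K d) (S K d))
    (hu0 : ∀ i : Fin d, δS (u K d (i, 0)) = 0)
    (hu1 : ∀ i : Fin d, δS (u K d (i, 1)) = u K d (i, 0))
    (hv0 : ∀ i : Fin d, δS (v K d (i, 0)) = 0)
    (hv1 : ∀ i : Fin d, δS (v K d (i, 1)) = v K d (i, 0)) :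
    ∀ f : S K d,
      δS f = 0 ↔ f ∈ Algebra.adjoin K
        ((Set.range fun i : Fin d => u K d (i, 0)) ∪
          (Set.range fun i : Fin d => v K d (i, 0)) ∪
          {p : S K d | ∃ i j : Fin d, i < j ∧ p = α K d i j} ∪
          {p : S K d | ∃ i j : Fin d, i < j ∧ p = β K d i j} ∪
          {p : S K d | ∃ i j : Fin d, p = γ K d i j}) := by
  intro f
  obtain ⟨g, rfl⟩ := (pairedVariables K d).surjective f
  rw [pairedVariables_weitzenbock hu0 hu1 hv0 hv1, EmbeddingLike.map_eq_zero_iff,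
    weitzenbock_eq_zero_iff_mem_adjoin, ← map_pairedVariables_adjoin_nowickiGenerators]
  exact ((pairedVariables K d).injective.mem_set_image).symm

end Stmt1
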